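/- arXiv:2604.18595 — 7 statements merged into one kernel-verified Lean document; each statement's English description precedes it below -/
import Mathlib

section
/- Let g : (0,1) → ℝ satisfy Q(g(y)) = y for all y ∈ (0,1), where Q is the Gaussian Q-function. Then g is strictly decreasing on (0,1) and strictly convex on (0, 1/2). -/
/-- The Gaussian Q-function: the upper-tail probability of the standard
normal distribution, `Q(x) = ∫_x^∞ (1/√(2π)) e^{−t²/2} dt`. -/
noncomputable def gaussQ (x : ℝ) : ℝ :=
  ∫ t in Set.Ioi x, (Real.sqrt (2 * Real.pi))⁻¹ * Real.exp (-t ^ 2 / 2)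

theorem gQ_int : MeasureTheory.Integrable
    (fun t : ℝ => (Real.sqrt (2 * Real.pi))⁻¹ * Real.exp (-t ^ 2 / 2)) := by
  have h := (integrable_exp_neg_mul_sq (b := 1 / 2) (by norm_num)).const_mul
    (Real.sqrt (2 * Real.pi))⁻¹
  refine h.congr (Filter.Eventually.of_forall fun t => ?_)
  simp only
  congr 2
  ring

theorem gQ_eq (x : ℝ) : gaussQ x = gaussQ 0 -
    ∫ t in (0 : ℝ)..x, (Real.sqrt (2 * Real.pi))⁻¹ * Real.exp (-t ^ 2 / 2) := by
  have h := intervalIntegral.integral_interval_add_Ioi (a := 0) (b := x)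
    gQ_int.integrableOn gQ_int.integrableOn
  unfold gaussQ
  linarith

theorem gQ_deriv (x : ℝ) : HasDerivAt gaussQ
    (-((Real.sqrt (2 * Real.pi))⁻¹ * Real.exp (-x ^ 2 / 2))) x := by
  have hc : Continuous
      (fun t : ℝ => (Real.sqrt (2 * Real.pi))⁻¹ * Real.exp (-t ^ 2 / 2)) := by fun_prop
  have h := (hc.integral_hasStrictDerivAt 0 x).hasDerivAt.const_sub (gaussQ 0)
  exact h.congr_of_eventuallyEq (Filter.Eventually.of_forall gQ_eq)

theorem gQ_cpos : 0 < (Real.sqrt (2 * Real.pi))⁻¹ := by positivity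

theorem gQ_anti : StrictAnti gaussQ := by
  apply strictAnti_of_deriv_neg
  intro x
  rw [(gQ_deriv x).deriv]
  have := mul_pos gQ_cpos (Real.exp_pos (-x ^ 2 / 2))
  linarith

theorem gQ_zero : gaussQ 0 = 1 / 2 := by
  have h := integral_gaussian_Ioi (1 / 2)
  have h2 : ∀ t : ℝ, -t ^ 2 / 2 = -(1 / 2) * t ^ 2 := fun t => by ring
  unfold gaussQ
  simp only [h2]
  rw [MeasureTheory.integral_const_mul, h]
  have h3 : Real.pi / (1 / 2) = 2 * Real.pi := by ring
  rw [h3]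
  have : Real.sqrt (2 * Real.pi) ≠ 0 := by positivity
  field_simp

theorem gQ_conv : StrictConvexOn ℝ (Set.Ici 0) gaussQ := by
  apply StrictMonoOn.strictConvexOn_of_deriv (convex_Ici 0)
  · exact fun x _ => (gQ_deriv x).continuousAt.continuousWithinAt
  · rw [interior_Ici]
    intro x hx y hy hxy
    rw [(gQ_deriv x).deriv, (gQ_deriv y).deriv]
    have hx' : 0 < x := hx
    apply neg_lt_neg
    apply mul_lt_mul_of_pos_left _ gQ_cpos
    apply Real.exp_lt_exp.2
    nlinarith

/-- An inverse `g` of the Gaussian Q-function is strictly decreasing on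
`(0,1)` and strictly convex on `(0, 1/2)`. -/
theorem inv_gaussQ_strictAntiOn_and_strictConvexOn
    (g : ℝ → ℝ) (hg : ∀ y ∈ Set.Ioo (0 : ℝ) 1, gaussQ (g y) = y) :
    StrictAntiOn g (Set.Ioo (0 : ℝ) 1) ∧
    StrictConvexOn ℝ (Set.Ioo (0 : ℝ) (1 / 2)) g := by
  constructor
  · intro x hx y hy hxy
    rw [← gQ_anti.lt_iff_gt, hg x hx, hg y hy]
    exact hxy
  · refine ⟨convex_Ioo _ _, ?_⟩
    have hpos : ∀ y ∈ Set.Ioo (0 : ℝ) (1 / 2), y ∈ Set.Ioo (0 : ℝ) 1 ∧ 0 ≤ g y := by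
      intro y hy
      have hy1 : y ∈ Set.Ioo (0 : ℝ) 1 := ⟨hy.1, by linarith [hy.2]⟩
      refine ⟨hy1, ?_⟩
      rw [← gQ_anti.le_iff_ge, hg y hy1, gQ_zero]
      exact hy.2.le
    intro x hx y hy hxy a b ha hb hab
    have hz := convex_Ioo (0 : ℝ) (1 / 2) hx hy ha.le hb.le hab
    have hne : g x ≠ g y := by
      intro h
      apply hxy
      rw [← hg x (hpos x hx).1, ← hg y (hpos y hy).1, h]
    have h := gQ_conv.2 (hpos x hx).2 (hpos y hy).2 hne ha hb hab
    rw [hg x (hpos x hx).1, hg y (hpos y hy).1] at h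
    rw [← gQ_anti.lt_iff_gt, hg _ (hpos _ hz).1]
    exact h
end

section
/- Fix a channel dispersion V > 0 and an error-rate-QoS exponent ϑ > 0, and let g : (0,1) → ℝ be an inverse of the Gaussian Q-function. Then √(V/n) · g(e^{−nϑ}) → √(2Vϑ) as n → ∞ (n ranging over the positive reals, or over the natural numbers). Consequently, for large nϑ the rate–reliability function admits the approximation R* = C − √(V/n) Q^{−1}(e^{−nϑ}) ≈ C − √(2Vϑ). -/
open MeasureTheory Filter Topology in
theorem aux_int : Integrable (fun t : ℝ => (Real.sqrt (2 * Real.pi))⁻¹ * Real.exp (-t ^ 2 / 2)) := by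
  have h := (integrable_exp_neg_mul_sq (b := 1/2) (by norm_num)).const_mul (Real.sqrt (2 * Real.pi))⁻¹
  refine h.congr (Eventually.of_forall fun t => ?_)
  simp only
  congr 2
  ring

open MeasureTheory in
theorem aux_total : ∫ t : ℝ, (Real.sqrt (2 * Real.pi))⁻¹ * Real.exp (-t ^ 2 / 2) = 1 := by
  have h := integral_gaussian (1/2)
  have e : ∀ t : ℝ, Real.exp (-t ^ 2 / 2) = Real.exp (-(1/2) * t ^ 2) := by
    intro t
    congr 1
    ring
  simp_rw [e]
  rw [integral_const_mul, h]
  have : Real.pi / (1/2) = 2 * Real.pi := by ring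
  rw [this]
  apply inv_mul_cancel₀
  positivity

open MeasureTheory in
theorem aux_upper (x : ℝ) (hx : 0 ≤ x) : gaussQ x ≤ Real.exp (-x ^ 2 / 2) := by
  have hi := (aux_int.comp_sub_right x).const_mul (Real.exp (-x ^ 2 / 2))
  calc gaussQ x ≤ ∫ t in Set.Ioi x, Real.exp (-x ^ 2 / 2) *
        ((Real.sqrt (2 * Real.pi))⁻¹ * Real.exp (-(t - x) ^ 2 / 2)) := by
        unfold gaussQ
        refine setIntegral_mono_on aux_int.integrableOn hi.integrableOn measurableSet_Ioi ?_
        intro t ht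
        have ht' : x < t := ht
        rw [mul_left_comm, ← Real.exp_add]
        gcongr
        nlinarith
    _ ≤ ∫ t, Real.exp (-x ^ 2 / 2) *
        ((Real.sqrt (2 * Real.pi))⁻¹ * Real.exp (-(t - x) ^ 2 / 2)) := by
        refine setIntegral_le_integral hi (Filter.Eventually.of_forall fun t => ?_)
        simp only [Pi.zero_apply]
        positivity
    _ = _ := by
        rw [integral_const_mul, integral_sub_right_eq_self
          (fun t : ℝ => (Real.sqrt (2 * Real.pi))⁻¹ * Real.exp (-t ^ 2 / 2)) x, aux_total, mul_one]

open MeasureTheory in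
theorem aux_lower (x z : ℝ) (hz : 0 ≤ z) (hx : x ≤ z) :
    (Real.sqrt (2 * Real.pi))⁻¹ * Real.exp (-(z + 1) ^ 2 / 2) ≤ gaussQ x := by
  calc (Real.sqrt (2 * Real.pi))⁻¹ * Real.exp (-(z + 1) ^ 2 / 2)
      = ∫ t in Set.Ioc z (z+1), (Real.sqrt (2 * Real.pi))⁻¹ * Real.exp (-(z + 1) ^ 2 / 2) := by
        simp
    _ ≤ ∫ t in Set.Ioc z (z+1), (Real.sqrt (2 * Real.pi))⁻¹ * Real.exp (-t ^ 2 / 2) := by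
        refine setIntegral_mono_on (integrableOn_const (by simp)) aux_int.integrableOn measurableSet_Ioc ?_
        intro t ht
        have h1 := ht.1
        have h2 := ht.2
        gcongr
        linarith
    _ ≤ gaussQ x := by
        unfold gaussQ
        refine setIntegral_mono_set aux_int.integrableOn
          (Filter.Eventually.of_forall fun t => ?_) (Filter.Eventually.of_forall ?_)
        · simp only [Pi.zero_apply]
          positivity
        · intro t ht
          exact lt_of_le_of_lt hx ht.1

theorem aux_real (V ϑ : ℝ) (hV : 0 < V) (hϑ : 0 < ϑ)
    (g : ℝ → ℝ) (hg : ∀ y ∈ Set.Ioo (0 : ℝ) 1, gaussQ (g y) = y) :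
    Filter.Tendsto
      (fun n : ℝ => Real.sqrt (V / n) * g (Real.exp (-(n * ϑ))))
      Filter.atTop (nhds (Real.sqrt (2 * V * ϑ))) := by
  set L := Real.log (2 * Real.pi) with hL
  have hc : (Real.sqrt (2 * Real.pi))⁻¹ = Real.exp (-L / 2) := by
    have : Real.sqrt (2 * Real.pi) = Real.exp (L / 2) := by
      rw [Real.sqrt_eq_iff_mul_self_eq (by positivity) (by positivity), ← Real.exp_add,
        add_halves, hL, Real.exp_log (by positivity)]
    rw [this, ← Real.exp_neg]
    congr 1
    ring
  have h0 : Filter.Tendsto (fun n : ℝ => V / n) Filter.atTop (nhds 0) :=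
    Filter.tendsto_id.const_div_atTop V
  have hlow : Filter.Tendsto (fun n : ℝ => Real.sqrt (2 * V * ϑ - V / n * L) - Real.sqrt (V / n))
      Filter.atTop (nhds (Real.sqrt (2 * V * ϑ))) := by
    have h1 := ((h0.mul_const L).const_sub (2 * V * ϑ)).sqrt
    have h2 := h1.sub h0.sqrt
    simpa using h2
  have key : ∀ᶠ n : ℝ in Filter.atTop, 0 < n ∧ L + 1 < 2 * (n * ϑ) := by
    filter_upwards [Filter.eventually_gt_atTop 0,
      Filter.eventually_gt_atTop ((L + 1) / (2 * ϑ))] with n h1 h2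
    refine ⟨h1, ?_⟩
    rw [div_lt_iff₀ (by positivity)] at h2
    linarith
  have key2 : ∀ n : ℝ, 0 < n → L + 1 < 2 * (n * ϑ) → 0 ≤ g (Real.exp (-(n * ϑ))) ∧
      g (Real.exp (-(n * ϑ))) ^ 2 ≤ 2 * (n * ϑ) ∧
      2 * (n * ϑ) - L ≤ (g (Real.exp (-(n * ϑ))) + 1) ^ 2 := by
    intro n hn hnL
    have hy := hg (Real.exp (-(n * ϑ))) ⟨Real.exp_pos _, by
      rw [Real.exp_lt_one_iff]
      have := mul_pos hn hϑ
      linarith⟩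
    set x := g (Real.exp (-(n * ϑ)))
    have hx : 0 ≤ x := by
      by_contra hx
      have h := aux_lower x 0 le_rfl (by linarith)
      rw [hy, hc, ← Real.exp_add, Real.exp_le_exp] at h
      linarith
    refine ⟨hx, ?_, ?_⟩
    · have h := aux_upper x hx
      rw [hy, Real.exp_le_exp] at h
      linarith
    · have h := aux_lower x x hx le_rfl
      rw [hy, hc, ← Real.exp_add, Real.exp_le_exp] at h
      linarith
  refine tendsto_of_tendsto_of_tendsto_of_le_of_le' hlow tendsto_const_nhds ?_ ?_
  · filter_upwards [key] with n hn
    obtain ⟨h1, h2, h3⟩ := key2 n hn.1 hn.2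
    have hn0 := hn.1
    have e : 2 * V * ϑ - V / n * L = V / n * (2 * (n * ϑ) - L) := by
      field_simp
    rw [e, Real.sqrt_mul (by positivity)]
    have := Real.sqrt_le_sqrt h3
    rw [Real.sqrt_sq (by linarith)] at this
    nlinarith [Real.sqrt_nonneg (V / n)]
  · filter_upwards [key] with n hn
    obtain ⟨h1, h2, h3⟩ := key2 n hn.1 hn.2
    have hn0 := hn.1
    have e : 2 * V * ϑ = V / n * (2 * (n * ϑ)) := by
      field_simp
    rw [e, Real.sqrt_mul (by positivity)]
    gcongr
    exact Real.le_sqrt_of_sq_le h2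

/-- For dispersion `V > 0` and error-rate-QoS exponent `ϑ > 0`,
`√(V/n) · Q⁻¹(e^{−nϑ}) → √(2Vϑ)` as the blocklength `n → ∞`, so that the
rate–reliability function satisfies `R* ≈ C − √(2Vϑ)` for large `nϑ`. -/
theorem rate_penalty_tendsto_sqrt_two_V_theta
    (V ϑ : ℝ) (hV : 0 < V) (hϑ : 0 < ϑ)
    (g : ℝ → ℝ) (hg : ∀ y ∈ Set.Ioo (0 : ℝ) 1, gaussQ (g y) = y) :
    Filter.Tendsto
      (fun n : ℝ => Real.sqrt (V / n) * g (Real.exp (-(n * ϑ))))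
      Filter.atTop (nhds (Real.sqrt (2 * V * ϑ))) ∧
    Filter.Tendsto
      (fun n : ℕ => Real.sqrt (V / n) * g (Real.exp (-(n * ϑ))))
      Filter.atTop (nhds (Real.sqrt (2 * V * ϑ))) := by
  exact ⟨aux_real V ϑ hV hϑ g hg,
    (aux_real V ϑ hV hϑ g hg).comp tendsto_natCast_atTop_atTop⟩
end

section
/- The function h(a,b) = e^{−a} + e^{−b} − e^{−(a+b)} is convex on the set S = {(a,b) ∈ ℝ² : a ≥ 0, b ≥ 0, e^{−a} + e^{−b} ≤ 1}, and the set S is itself convex. -/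
/-- The domain `S = {(a,b) : a ≥ 0, b ≥ 0, e^{−a} + e^{−b} ≤ 1}`. -/
def qosDom : Set (ℝ × ℝ) :=
  {p | 0 ≤ p.1 ∧ 0 ≤ p.2 ∧ Real.exp (-p.1) + Real.exp (-p.2) ≤ 1}

theorem qosDom_convex : Convex ℝ qosDom := by
  rintro ⟨a, b⟩ ⟨h1, h2, h3⟩ ⟨c, d⟩ ⟨k1, k2, k3⟩ s t hs ht hst
  simp only at h1 h2 h3 k1 k2 k3
  have e1 := convexOn_exp.2 (Set.mem_univ (-a)) (Set.mem_univ (-c)) hs ht hst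
  have e2 := convexOn_exp.2 (Set.mem_univ (-b)) (Set.mem_univ (-d)) hs ht hst
  simp only [smul_eq_mul] at e1 e2
  refine ⟨?_, ?_, ?_⟩
  · simp only [Prod.fst_add, Prod.smul_fst, smul_eq_mul]; positivity
  · simp only [Prod.snd_add, Prod.smul_snd, smul_eq_mul]; positivity
  · simp only [Prod.fst_add, Prod.smul_fst, Prod.snd_add, Prod.smul_snd, smul_eq_mul]
    rw [show -(s * a + t * c) = s * -a + t * -c by ring,
      show -(s * b + t * d) = s * -b + t * -d by ring]
    nlinarith [mul_le_mul_of_nonneg_left h3 hs, mul_le_mul_of_nonneg_left k3 ht]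

theorem qos_line (a b u v : ℝ)
    (h : ∀ t ∈ Set.Icc (0:ℝ) 1, Real.exp (-(a + t * u)) + Real.exp (-(b + t * v)) ≤ 1) :
    ConvexOn ℝ (Set.Icc (0:ℝ) 1) (fun t => Real.exp (-(a + t * u)) + Real.exp (-(b + t * v))
      - Real.exp (-((a + t * u) + (b + t * v)))) := by
  have key : ∀ p q t : ℝ, HasDerivAt (fun t => Real.exp (-(p + t * q)))
      (Real.exp (-(p + t * q)) * (-q)) t := by
    intro p q t
    have := ((((hasDerivAt_id t).mul_const q).const_add p).neg).exp
    simpa using this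
  have e : ∀ t : ℝ, (a + t * u) + (b + t * v) = (a + b) + t * (u + v) := fun t => by ring
  simp only [e]
  refine convexOn_of_hasDerivWithinAt2_nonneg (convex_Icc 0 1) (by fun_prop)
    (f' := fun t => Real.exp (-(a + t * u)) * (-u) + Real.exp (-(b + t * v)) * (-v)
      - Real.exp (-((a + b) + t * (u + v))) * (-(u + v)))
    (f'' := fun t => Real.exp (-(a + t * u)) * (-u) * (-u) + Real.exp (-(b + t * v)) * (-v) * (-v)
      - Real.exp (-((a + b) + t * (u + v))) * (-(u + v)) * (-(u + v))) ?_ ?_ ?_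
  · intro t _
    exact (((key a u t).add (key b v t)).sub (key (a + b) (u + v) t)).hasDerivWithinAt
  · intro t _
    exact ((((key a u t).mul_const _).add ((key b v t).mul_const _)).sub
      ((key (a + b) (u + v) t).mul_const _)).hasDerivWithinAt
  · intro t ht
    have h1 := h t (interior_subset ht)
    have e2 : Real.exp (-((a + b) + t * (u + v)))
        = Real.exp (-(a + t * u)) * Real.exp (-(b + t * v)) := by
      rw [← Real.exp_add]; congr 1; ring
    simp only [e2]
    have hx := Real.exp_pos (-(a + t * u))
    have hy := Real.exp_pos (-(b + t * v))
    generalize Real.exp (-(a + t * u)) = x at *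
    generalize Real.exp (-(b + t * v)) = y at *
    have h2 : 0 ≤ (x * u ^ 2 + y * v ^ 2) * (1 - (x + y)) :=
      mul_nonneg (by positivity) (by linarith)
    nlinarith [sq_nonneg (x * u - y * v)]

/-- The per-channel-state term `h(a,b) = e^{−a} + e^{−b} − e^{−(a+b)}` of
the log-moment generating function is convex on
`S = {(a,b) : a ≥ 0, b ≥ 0, e^{−a} + e^{−b} ≤ 1}`, and `S` is convex. -/
theorem per_state_term_convexOn :
    Convex ℝ qosDom ∧
    ConvexOn ℝ qosDom
      (fun p : ℝ × ℝ =>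
        Real.exp (-p.1) + Real.exp (-p.2) - Real.exp (-(p.1 + p.2))) := by
  refine ⟨qosDom_convex, qosDom_convex, ?_⟩
  rintro ⟨a, b⟩ hp ⟨c, d⟩ hq s t hs ht hst
  have hl := qos_line a b (c - a) (d - b) (by
    intro r hr
    have := (qosDom_convex hp hq (sub_nonneg.2 hr.2) hr.1 (by ring)).2.2
    simp only [Prod.fst_add, Prod.smul_fst, Prod.snd_add, Prod.smul_snd, smul_eq_mul] at this
    convert this using 4 <;> ring)
  have := hl.2 (x := 0) (by simp) (y := 1) (by simp) hs ht hst
  obtain rfl : s = 1 - t := by linarith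
  simp only [Prod.fst_add, Prod.smul_fst, Prod.snd_add, Prod.smul_snd, smul_eq_mul,
    mul_zero, mul_one, zero_mul, one_mul, zero_add, add_zero, add_sub_cancel] at this ⊢
  rw [show (1 - t) * a + t * c = a + t * (c - a) by ring,
    show (1 - t) * b + t * d = b + t * (d - b) by ring]
  exact this
end

section
/- Let (Ω, μ) be a probability space, n > 0 a blocklength, r₀ > 0, and R : Ω → ℝ a measurable coding-rate function with R(ω) ≥ r₀ for μ-almost every ω. Then the moment generating functional M(θ,ϑ) = ∫_Ω ( e^{−nϑ} + (1 − e^{−nϑ}) e^{−nθR(ω)} ) dμ(ω) is jointly convex in (θ,ϑ) on the set D = {(θ,ϑ) ∈ ℝ² : θ ≥ 0, ϑ ≥ 0, e^{−nϑ} + e^{−nθr₀} ≤ 1}, and D is a convex set. (Joint convexity of the service-process moment functional underlying Theorem 2, Claim 1.) -/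
open MeasureTheory

lemma exp_neg_comb (c x y a b : ℝ) (ha : 0 ≤ a) (hb : 0 ≤ b) (hab : a + b = 1) :
    Real.exp (-(c * (a * x + b * y))) ≤ a * Real.exp (-(c * x)) + b * Real.exp (-(c * y)) := by
  have h := convexOn_exp.2 (Set.mem_univ (-(c * x))) (Set.mem_univ (-(c * y))) ha hb hab
  simp only [smul_eq_mul] at h
  refine le_trans (le_of_eq ?_) h
  congr 1; ring

lemma hasDeriv_aux (k a u t : ℝ) : HasDerivAt (fun t : ℝ => k * Real.exp (-(a + t * u)))
    (k * (-u) * Real.exp (-(a + t * u))) t := by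
  have h1 : HasDerivAt (fun t : ℝ => -(a + t * u)) (-u) t := by
    have h := (((hasDerivAt_id t).mul_const u).const_add a).neg
    rw [one_mul] at h
    exact h
  have := (h1.exp).const_mul k
  exact this.congr_deriv (by ring)

lemma pt_convex (a1 b1 a2 b2 l m : ℝ) (hl : 0 ≤ l) (hm : 0 ≤ m) (hlm : l + m = 1)
    (h1 : Real.exp (-b1) + Real.exp (-a1) ≤ 1) (h2 : Real.exp (-b2) + Real.exp (-a2) ≤ 1) :
    Real.exp (-(l * b1 + m * b2)) + (1 - Real.exp (-(l * b1 + m * b2))) *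
        Real.exp (-(l * a1 + m * a2)) ≤
      l * (Real.exp (-b1) + (1 - Real.exp (-b1)) * Real.exp (-a1)) +
      m * (Real.exp (-b2) + (1 - Real.exp (-b2)) * Real.exp (-a2)) := by
  obtain ⟨u, hu⟩ : ∃ u, u = a2 - a1 := ⟨_, rfl⟩
  obtain ⟨v, hv⟩ : ∃ v, v = b2 - b1 := ⟨_, rfl⟩
  let G : ℝ → ℝ → ℝ → ℝ → ℝ := fun p q r t => p * Real.exp (-(b1 + t * v)) +
    q * Real.exp (-(a1 + t * u)) + r * Real.exp (-((a1 + b1) + t * (u + v)))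
  have hG : ∀ p q r t, HasDerivAt (G p q r) (G (p * (-v)) (q * (-u)) (r * (-(u + v))) t) t := by
    intro p q r t
    exact ((hasDeriv_aux p b1 v t).add (hasDeriv_aux q a1 u t)).add
      (hasDeriv_aux r (a1 + b1) (u + v) t)
  have hconv : ConvexOn ℝ (Set.Icc (0:ℝ) 1) (G 1 1 (-1)) := by
    refine convexOn_of_hasDerivWithinAt2_nonneg (convex_Icc 0 1)
      (fun t _ => (hG 1 1 (-1) t).continuousAt.continuousWithinAt)
      (fun t _ => (hG 1 1 (-1) t).hasDerivWithinAt)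
      (fun t _ => (hG _ _ _ t).hasDerivWithinAt) ?_
    intro t ht
    rw [interior_Icc] at ht
    have e1 := exp_neg_comb 1 a1 a2 (1 - t) t (by linarith [ht.2]) ht.1.le (by ring)
    have e2 := exp_neg_comb 1 b1 b2 (1 - t) t (by linarith [ht.2]) ht.1.le (by ring)
    have q1 : 1 * ((1 - t) * a1 + t * a2) = a1 + t * u := by rw [hu]; ring
    have q2 : 1 * ((1 - t) * b1 + t * b2) = b1 + t * v := by rw [hv]; ring
    rw [q1, one_mul, one_mul] at e1
    rw [q2, one_mul, one_mul] at e2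
    have q3 : Real.exp (-((a1 + b1) + t * (u + v))) =
        Real.exp (-(a1 + t * u)) * Real.exp (-(b1 + t * v)) := by
      rw [← Real.exp_add]; congr 1; ring
    have hx := Real.exp_pos (-(a1 + t * u))
    have hy := Real.exp_pos (-(b1 + t * v))
    simp only [G]
    rw [q3]
    generalize Real.exp (-(a1 + t * u)) = x at *
    generalize Real.exp (-(b1 + t * v)) = y at *
    have hxy : 0 ≤ 1 - x - y := by nlinarith [ht.1, ht.2]
    have k1 := mul_nonneg (mul_nonneg hx.le (sq_nonneg u)) hxy
    have k2 := mul_nonneg (mul_nonneg hy.le (sq_nonneg v)) hxy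
    nlinarith [sq_nonneg (u * x - v * y)]
  have key := hconv.2 (Set.left_mem_Icc.2 zero_le_one) (Set.right_mem_Icc.2 zero_le_one) hl hm hlm
  have hl' : l = 1 - m := by linarith
  have hF : ∀ t a b, a = a1 + t * u → b = b1 + t * v → G 1 1 (-1) t =
      Real.exp (-b) + (1 - Real.exp (-b)) * Real.exp (-a) := by
    intro t a b h h'
    have q3 : Real.exp (-((a1 + b1) + t * (u + v))) =
        Real.exp (-(a1 + t * u)) * Real.exp (-(b1 + t * v)) := by
      rw [← Real.exp_add]; congr 1; ring
    simp only [G]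
    rw [q3, h, h']; ring
  simp only [smul_eq_mul] at key
  rw [hF _ (l * a1 + m * a2) (l * b1 + m * b2) (by rw [hu, hl']; ring) (by rw [hv, hl']; ring),
    hF 0 a1 b1 (by ring) (by ring), hF 1 a2 b2 (by rw [hu]; ring) (by rw [hv]; ring)] at key
  exact key

/-- Joint convexity of the service-process moment generating functional
(Theorem 2, Claim 1): with coding rate `R ≥ r₀ > 0` a.e., the functional
`M(θ,ϑ) = ∫ (e^{−nϑ} + (1 − e^{−nϑ}) e^{−nθR(ω)}) dμ` is jointly convex
in `(θ,ϑ)` on `D = {(θ,ϑ) : θ ≥ 0, ϑ ≥ 0, e^{−nϑ} + e^{−nθr₀} ≤ 1}`,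
and `D` is a convex set. -/
theorem MGF_jointly_convexOn
    {Ω : Type*} [MeasurableSpace Ω] (μ : Measure Ω) [IsProbabilityMeasure μ]
    (n r₀ : ℝ) (hn : 0 < n) (hr₀ : 0 < r₀)
    (R : Ω → ℝ) (hRmeas : Measurable R) (hR : ∀ᵐ ω ∂μ, r₀ ≤ R ω) :
    Convex ℝ {p : ℝ × ℝ | 0 ≤ p.1 ∧ 0 ≤ p.2 ∧
        Real.exp (-(n * p.2)) + Real.exp (-(n * p.1 * r₀)) ≤ 1} ∧
    ConvexOn ℝ {p : ℝ × ℝ | 0 ≤ p.1 ∧ 0 ≤ p.2 ∧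
        Real.exp (-(n * p.2)) + Real.exp (-(n * p.1 * r₀)) ≤ 1}
      (fun p : ℝ × ℝ =>
        ∫ ω, (Real.exp (-(n * p.2)) +
          (1 - Real.exp (-(n * p.2))) * Real.exp (-(n * p.1 * R ω))) ∂μ) := by
  have hD : Convex ℝ {p : ℝ × ℝ | 0 ≤ p.1 ∧ 0 ≤ p.2 ∧
        Real.exp (-(n * p.2)) + Real.exp (-(n * p.1 * r₀)) ≤ 1} := by
    rintro ⟨x1, y1⟩ ⟨h1, h2, h3⟩ ⟨x2, y2⟩ ⟨h4, h5, h6⟩ a b ha hb hab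
    simp only [Set.mem_setOf_eq, Prod.smul_mk, Prod.mk_add_mk, smul_eq_mul] at *
    refine ⟨by positivity, by positivity, ?_⟩
    have e1 := exp_neg_comb n y1 y2 a b ha hb hab
    have e2 := exp_neg_comb (n * r₀) x1 x2 a b ha hb hab
    rw [show n * r₀ * (a * x1 + b * x2) = n * (a * x1 + b * x2) * r₀ by ring,
      show n * r₀ * x1 = n * x1 * r₀ by ring, show n * r₀ * x2 = n * x2 * r₀ by ring] at e2
    nlinarith [mul_le_mul_of_nonneg_left h3 ha, mul_le_mul_of_nonneg_left h6 hb]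
  have hint : ∀ x y : ℝ, 0 ≤ x → Integrable (fun ω => Real.exp (-(n * y)) +
          (1 - Real.exp (-(n * y))) * Real.exp (-(n * x * R ω))) μ := by
    intro x y hx
    refine (integrable_const _).add (Integrable.const_mul ?_ _)
    refine Integrable.of_bound (C := 1) (by fun_prop) ?_
    filter_upwards [hR] with ω hω
    rw [Real.norm_eq_abs, Real.abs_exp, Real.exp_le_one_iff]
    have : 0 ≤ R ω := by linarith
    have : 0 ≤ n * x * R ω := by positivity
    linarith
  refine ⟨hD, hD, ?_⟩
  rintro ⟨x1, y1⟩ ⟨h1, h2, h3⟩ ⟨x2, y2⟩ ⟨h4, h5, h6⟩ a b ha hb hab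
  simp only [Prod.smul_mk, Prod.mk_add_mk, smul_eq_mul] at *
  rw [← integral_const_mul, ← integral_const_mul,
    ← integral_add ((hint x1 y1 h1).const_mul a) ((hint x2 y2 h4).const_mul b)]
  refine integral_mono_ae (hint _ _ (by positivity))
    (((hint x1 y1 h1).const_mul a).add ((hint x2 y2 h4).const_mul b)) ?_
  filter_upwards [hR] with ω hω
  have mono : ∀ x, 0 ≤ x → Real.exp (-(n * x * R ω)) ≤ Real.exp (-(n * x * r₀)) := by
    intro x hx
    apply Real.exp_le_exp.2
    have : n * x * r₀ ≤ n * x * R ω := by gcongr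
    linarith
  have := pt_convex (n * x1 * R ω) (n * y1) (n * x2 * R ω) (n * y2) a b ha hb hab
    (by linarith [mono x1 h1]) (by linarith [mono x2 h4])
  rw [show a * (n * y1) + b * (n * y2) = n * (a * y1 + b * y2) by ring,
    show a * (n * x1 * R ω) + b * (n * x2 * R ω) = n * (a * x1 + b * x2) * R ω by ring] at this
  exact this
end

section
/- Let (Ω, μ) be a probability space, n > 0 a blocklength, r₀ > 0, and R : Ω → ℝ a measurable coding-rate function with R(ω) ≥ r₀ for μ-almost every ω. For every u ∈ ℝ, the feasible QoS region F(u) = {(θ,ϑ) ∈ ℝ² : θ ≥ 0, ϑ ≥ 0, e^{−nϑ} + e^{−nθr₀} ≤ 1, and Λ(θ,ϑ) ≤ u} is a convex set, where Λ(θ,ϑ) = log ∫_Ω ( e^{−nϑ} + (1 − e^{−nϑ}) e^{−nθR(ω)} ) dμ(ω). Hence time-sharing (convex combination) of two feasible delay/reliability QoS operating points remains feasible. -/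
open MeasureTheory

lemma exp_seg (x1 x2 s t : ℝ) (hs : 0 ≤ s) (ht : 0 ≤ t) (hst : s + t = 1) :
    Real.exp (s * x1 + t * x2) ≤ s * Real.exp x1 + t * Real.exp x2 := by
  simpa using convexOn_exp.2 (Set.mem_univ x1) (Set.mem_univ x2) hs ht hst

lemma key_convex (x1 y1 x2 y2 s t : ℝ)
    (h1 : Real.exp x1 + Real.exp y1 ≤ 1) (h2 : Real.exp x2 + Real.exp y2 ≤ 1)
    (hs : 0 ≤ s) (ht : 0 ≤ t) (hst : s + t = 1) :
    Real.exp (s * x1 + t * x2) + (1 - Real.exp (s * x1 + t * x2)) * Real.exp (s * y1 + t * y2)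
      ≤ s * (Real.exp x1 + (1 - Real.exp x1) * Real.exp y1)
        + t * (Real.exp x2 + (1 - Real.exp x2) * Real.exp y2) := by
  set β := x2 - x1 with hβ
  set δ := y2 - y1 with hδ
  let a : ℝ → ℝ := fun τ => Real.exp (x1 + τ * β)
  let b : ℝ → ℝ := fun τ => Real.exp (y1 + τ * δ)
  have ha : ∀ τ, HasDerivAt a (a τ * β) τ := fun τ => by
    have := (((hasDerivAt_id τ).mul_const β).const_add x1).exp
    simpa [a] using this
  have hb : ∀ τ, HasDerivAt b (b τ * δ) τ := fun τ => by
    have := (((hasDerivAt_id τ).mul_const δ).const_add y1).exp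
    simpa [b] using this
  have hc : ConvexOn ℝ (Set.Icc (0:ℝ) 1) (fun τ => a τ + (1 - a τ) * b τ) := by
    apply convexOn_of_hasDerivWithinAt2_nonneg (convex_Icc 0 1)
      (f' := fun τ => a τ * β + (-(a τ * β) * b τ + (1 - a τ) * (b τ * δ)))
      (f'' := fun τ => a τ * β * β + ((-(a τ * β * β) * b τ + -(a τ * β) * (b τ * δ)) +
        (-(a τ * β) * (b τ * δ) + (1 - a τ) * (b τ * δ * δ))))
    · intro τ _
      exact ((ha τ).add (((ha τ).const_sub 1).mul (hb τ))).continuousAt.continuousWithinAt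
    · intro τ _
      exact ((ha τ).add (((ha τ).const_sub 1).mul (hb τ))).hasDerivWithinAt
    · intro τ _
      exact (((ha τ).mul_const β).add (((((ha τ).mul_const β).neg).mul (hb τ)).add
        (((ha τ).const_sub 1).mul ((hb τ).mul_const δ)))).hasDerivWithinAt
    · intro τ hτ
      have hτ' := interior_subset hτ
      have e1 := exp_seg x1 x2 (1 - τ) τ (by linarith [hτ'.2]) hτ'.1 (by ring)
      have e2 := exp_seg y1 y2 (1 - τ) τ (by linarith [hτ'.2]) hτ'.1 (by ring)
      have ea : a τ = Real.exp ((1 - τ) * x1 + τ * x2) := by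
        simp only [a, hβ]; congr 1; ring
      have eb : b τ = Real.exp ((1 - τ) * y1 + τ * y2) := by
        simp only [b, hδ]; congr 1; ring
      have pa : 0 < a τ := Real.exp_pos _
      have pb : 0 < b τ := Real.exp_pos _
      have hab : a τ + b τ ≤ 1 := by
        rw [ea, eb]
        have := mul_le_mul_of_nonneg_left h1 (by linarith [hτ'.2] : 0 ≤ 1 - τ)
        have := mul_le_mul_of_nonneg_left h2 hτ'.1
        linarith
      have q1 : 0 ≤ a τ * β ^ 2 * (1 - a τ - b τ) :=
        mul_nonneg (by positivity) (by linarith)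
      have q2 : 0 ≤ b τ * δ ^ 2 * (1 - a τ - b τ) :=
        mul_nonneg (by positivity) (by linarith)
      nlinarith [sq_nonneg (a τ * β - b τ * δ)]
  have := hc.2 (x := 0) (y := 1) (by simp) (by simp) hs ht hst
  have k1 : x1 + t * β = s * x1 + t * x2 := by rw [hβ, ← sub_eq_of_eq_add hst.symm]; ring
  have k2 : y1 + t * δ = s * y1 + t * y2 := by rw [hδ, ← sub_eq_of_eq_add hst.symm]; ring
  rw [← k1, ← k2]
  simpa [a, b, hβ, hδ] using this

/-- Convexity of the feasible QoS region (Definition 9): for any `u ∈ ℝ`,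
`F(u) = {(θ,ϑ) : θ ≥ 0, ϑ ≥ 0, e^{−nϑ} + e^{−nθr₀} ≤ 1, Λ(θ,ϑ) ≤ u}` is a
convex set, where `Λ(θ,ϑ) = log ∫ (e^{−nϑ} + (1 − e^{−nϑ}) e^{−nθR}) dμ`.
Hence time-sharing of two feasible QoS operating points remains feasible. -/
theorem feasible_QoS_region_convex
    {Ω : Type*} [MeasurableSpace Ω] (μ : Measure Ω) [IsProbabilityMeasure μ]
    (n r₀ : ℝ) (hn : 0 < n) (hr₀ : 0 < r₀)
    (R : Ω → ℝ) (hRmeas : Measurable R) (hR : ∀ᵐ ω ∂μ, r₀ ≤ R ω)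
    (u : ℝ) :
    Convex ℝ {p : ℝ × ℝ | 0 ≤ p.1 ∧ 0 ≤ p.2 ∧
        Real.exp (-(n * p.2)) + Real.exp (-(n * p.1 * r₀)) ≤ 1 ∧
        Real.log (∫ ω, (Real.exp (-(n * p.2)) +
          (1 - Real.exp (-(n * p.2))) * Real.exp (-(n * p.1 * R ω))) ∂μ)
          ≤ u} := by
  have hint : ∀ θ c : ℝ, 0 ≤ θ → Integrable (fun ω => Real.exp (-(n * c)) +
      (1 - Real.exp (-(n * c))) * Real.exp (-(n * θ * R ω))) μ := by
    intro θ c hθ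
    refine (integrable_const _).add (Integrable.const_mul ?_ _)
    refine Integrable.of_bound (by fun_prop) 1 ?_
    filter_upwards [hR] with ω hω
    have : 0 ≤ n * θ * R ω := mul_nonneg (mul_nonneg hn.le hθ) (hr₀.le.trans hω)
    rw [Real.norm_eq_abs, Real.abs_exp]
    exact Real.exp_le_one_iff.2 (by linarith)
  have hpos : ∀ θ c : ℝ, 0 ≤ θ → 0 ≤ c → 0 < ∫ ω, (Real.exp (-(n * c)) +
      (1 - Real.exp (-(n * c))) * Real.exp (-(n * θ * R ω))) ∂μ := by
    intro θ c hθ hc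
    have h1 : Real.exp (-(n * c)) ≤ 1 :=
      Real.exp_le_one_iff.2 (by linarith [mul_nonneg hn.le hc])
    have : ∫ ω, Real.exp (-(n * c)) ∂μ ≤ ∫ ω, (Real.exp (-(n * c)) +
      (1 - Real.exp (-(n * c))) * Real.exp (-(n * θ * R ω))) ∂μ := by
      refine integral_mono (integrable_const _) (hint θ c hθ) fun ω => ?_
      have := mul_nonneg (sub_nonneg.2 h1) (Real.exp_pos (-(n * θ * R ω))).le
      simpa using this
    refine lt_of_lt_of_le ?_ this
    simpa using Real.exp_pos _
  rintro ⟨θ1, c1⟩ ⟨hθ1, hc1, hr1, hl1⟩ ⟨θ2, c2⟩ ⟨hθ2, hc2, hr2, hl2⟩ s t hs ht hst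
  simp only at hθ1 hc1 hr1 hl1 hθ2 hc2 hr2 hl2
  have hθ : 0 ≤ s * θ1 + t * θ2 := by positivity
  have hc : 0 ≤ s * c1 + t * c2 := by positivity
  have ec : -(n * (s * c1 + t * c2)) = s * (-(n * c1)) + t * (-(n * c2)) := by ring
  have eθ : ∀ r, -(n * (s * θ1 + t * θ2) * r)
      = s * (-(n * θ1 * r)) + t * (-(n * θ2 * r)) := by intro r; ring
  simp only [Set.mem_setOf_eq, Prod.smul_mk, Prod.mk_add_mk, smul_eq_mul]
  refine ⟨hθ, hc, ?_, ?_⟩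
  · rw [ec, eθ]
    have e1 := exp_seg (-(n * c1)) (-(n * c2)) s t hs ht hst
    have e2 := exp_seg (-(n * θ1 * r₀)) (-(n * θ2 * r₀)) s t hs ht hst
    have := mul_le_mul_of_nonneg_left hr1 hs
    have := mul_le_mul_of_nonneg_left hr2 ht
    linarith
  · rw [Real.log_le_iff_le_exp (hpos _ _ hθ hc)]
    rw [Real.log_le_iff_le_exp (hpos _ _ hθ1 hc1)] at hl1
    rw [Real.log_le_iff_le_exp (hpos _ _ hθ2 hc2)] at hl2
    have i1 := (hint θ1 c1 hθ1).const_mul s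
    have i2 := (hint θ2 c2 hθ2).const_mul t
    have hm := integral_mono_ae (hint _ (s * c1 + t * c2) hθ) (i1.add i2) (by
      filter_upwards [hR] with ω hω
      simp only [Pi.add_apply]
      rw [ec, eθ]
      refine key_convex _ _ _ _ s t (le_trans ?_ hr1) (le_trans ?_ hr2) hs ht hst
      · have := mul_le_mul_of_nonneg_left hω (mul_nonneg hn.le hθ1)
        gcongr
      · have := mul_le_mul_of_nonneg_left hω (mul_nonneg hn.le hθ2)
        gcongr)
    rw [integral_add' i1 i2, integral_const_mul, integral_const_mul] at hm
    have := mul_le_mul_of_nonneg_left hl1 hs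
    have := mul_le_mul_of_nonneg_left hl2 ht
    have e : s * Real.exp u + t * Real.exp u = Real.exp u := by rw [← add_mul, hst, one_mul]
    linarith
end

section
/- Let (Ω, μ) be a probability space, n > 0 a blocklength, ϑ > 0 an error-rate-QoS exponent, and R : Ω → ℝ a nonnegative measurable coding-rate function. Then the ε-effective capacity θ ↦ EC(θ,ϑ) = −(1/(nθ)) log ∫_Ω ( e^{−nϑ} + (1 − e^{−nϑ}) e^{−nθR(ω)} ) dμ(ω) is nonincreasing in the delay-QoS exponent θ on (0, ∞): more stringent delay-bounded QoS requirements can only reduce the supportable constant arrival rate. -/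
open MeasureTheory

/-- The ε-effective capacity is nonincreasing in the delay-QoS exponent
`θ` on `(0, ∞)`: more stringent delay-bounded QoS requirements can only
reduce the supportable constant arrival rate. -/
theorem eps_effective_capacity_antitoneOn
    {Ω : Type*} [MeasurableSpace Ω] (μ : Measure Ω) [IsProbabilityMeasure μ]
    (n ϑ : ℝ) (hn : 0 < n) (hϑ : 0 < ϑ)
    (R : Ω → ℝ) (hRmeas : Measurable R) (hRnonneg : ∀ ω, 0 ≤ R ω) :
    AntitoneOn
      (fun θ : ℝ => -(1 / (n * θ)) *
        Real.log (∫ ω, (Real.exp (-(n * ϑ)) +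
          (1 - Real.exp (-(n * ϑ))) * Real.exp (-(n * θ * R ω))) ∂μ))
      (Set.Ioi (0 : ℝ)) := by
  intro a ha b hb hab
  have ha0 : 0 < a := ha
  have hb0 : 0 < b := hb
  show -(1 / (n * b)) * _ ≤ -(1 / (n * a)) * _
  set e := Real.exp (-(n * ϑ)) with he
  have he0 : 0 < e := Real.exp_pos _
  have he1 : e ≤ 1 := Real.exp_le_one_iff.2 (by nlinarith [mul_pos hn hϑ])
  have hle : ∀ t : ℝ, 0 < t → ∀ ω, Real.exp (-(n * t * R ω)) ≤ 1 := fun t ht ω =>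
    Real.exp_le_one_iff.2 (by have := mul_nonneg (mul_pos hn ht).le (hRnonneg ω); linarith)
  have hlow : ∀ t : ℝ, ∀ ω, e ≤ e + (1 - e) * Real.exp (-(n * t * R ω)) := fun t ω => by
    have := mul_nonneg (sub_nonneg.2 he1) (Real.exp_pos (-(n * t * R ω))).le
    linarith
  have hup : ∀ t : ℝ, 0 < t → ∀ ω, e + (1 - e) * Real.exp (-(n * t * R ω)) ≤ 1 :=
    fun t ht ω => by
      have := mul_le_mul_of_nonneg_left (hle t ht ω) (sub_nonneg.2 he1)
      linarith
  have hmeas : ∀ t : ℝ, Measurable (fun ω => e + (1 - e) * Real.exp (-(n * t * R ω))) :=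
    fun t => by fun_prop
  have hint : ∀ t : ℝ, 0 < t →
      Integrable (fun ω => e + (1 - e) * Real.exp (-(n * t * R ω))) μ := fun t ht =>
    Integrable.of_bound (hmeas t).aestronglyMeasurable 1 (Filter.Eventually.of_forall fun ω => by
      rw [Real.norm_eq_abs, abs_of_nonneg (he0.le.trans (hlow t ω))]
      exact hup t ht ω)
  have hpos : ∀ t : ℝ, 0 < t →
      0 < ∫ ω, (e + (1 - e) * Real.exp (-(n * t * R ω))) ∂μ := fun t ht => by
    have h := integral_mono (integrable_const (μ := μ) e) (hint t ht) (hlow t)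
    simp only [integral_const, probReal_univ, one_smul] at h
    linarith
  have hp : 1 ≤ b / a := (one_le_div ha0).2 hab
  have hp0 : 0 ≤ b / a := by positivity
  have hintp : Integrable (fun ω => (e + (1 - e) * Real.exp (-(n * a * R ω))) ^ (b / a)) μ :=
    Integrable.of_bound ((hmeas a).pow_const _).aestronglyMeasurable 1
      (Filter.Eventually.of_forall fun ω => by
        have h0 := he0.le.trans (hlow a ω)
        rw [Real.norm_eq_abs, abs_of_nonneg (Real.rpow_nonneg h0 _)]
        exact Real.rpow_le_one h0 (hup a ha0 ω) hp0)
  have hJ := (convexOn_rpow hp).map_integral_le (μ := μ)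
    (f := fun ω => e + (1 - e) * Real.exp (-(n * a * R ω)))
    (Real.continuous_rpow_const hp0).continuousOn isClosed_Ici
    (Filter.Eventually.of_forall fun ω => he0.le.trans (hlow a ω)) (hint a ha0) hintp
  have hpt : ∀ ω, (e + (1 - e) * Real.exp (-(n * a * R ω))) ^ (b / a)
      ≤ e + (1 - e) * Real.exp (-(n * b * R ω)) := fun ω => by
    have h := (convexOn_rpow hp).2 (x := 1) (y := Real.exp (-(n * a * R ω)))
      (Set.mem_Ici.2 zero_le_one) (Set.mem_Ici.2 (Real.exp_pos _).le) he0.le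
      (sub_nonneg.2 he1) (by ring)
    simp only [smul_eq_mul, mul_one, Real.one_rpow] at h
    rw [← Real.exp_mul] at h
    have h2 : -(n * a * R ω) * (b / a) = -(n * b * R ω) := by field_simp
    rwa [h2] at h
  have hK := hJ.trans (integral_mono hintp (hint b hb0) hpt)
  have hL := Real.log_le_log (Real.rpow_pos_of_pos (hpos a ha0) _) hK
  rw [Real.log_rpow (hpos a ha0)] at hL
  have hM := mul_le_mul_of_nonneg_left hL (show 0 ≤ 1 / (n * b) by positivity)
  have h3 : ∀ x : ℝ, 1 / (n * b) * (b / a * x) = 1 / (n * a) * x := fun x => by field_simp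
  rw [h3] at hM
  linarith
end

section
/- Let (Ω, μ) be a probability space, n > 0 a blocklength, ϑ > 0 an error-rate-QoS exponent, and R : Ω → ℝ a nonnegative, integrable, measurable coding-rate function. Then the ε-effective capacity satisfies EC(θ,ϑ) → (1 − e^{−nϑ}) ∫_Ω R dμ as θ → 0⁺: as the delay-bounded QoS constraint is relaxed, the ε-effective capacity converges to the mean service rate discounted by the decoding success probability 1 − e^{−nϑ}. -/
open MeasureTheory

/-- As the delay constraint is relaxed (`θ → 0⁺`), the ε-effective
capacity converges to the mean service rate discounted by the decoding
success probability: `EC(θ,ϑ) → (1 − e^{−nϑ}) ∫ R dμ`. -/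
theorem eps_effective_capacity_limit_theta_zero
    {Ω : Type*} [MeasurableSpace Ω] (μ : Measure Ω) [IsProbabilityMeasure μ]
    (n ϑ : ℝ) (hn : 0 < n) (hϑ : 0 < ϑ)
    (R : Ω → ℝ) (hRmeas : Measurable R) (hRnonneg : ∀ ω, 0 ≤ R ω)
    (hRint : Integrable R μ) :
    Filter.Tendsto
      (fun θ : ℝ => -(1 / (n * θ)) *
        Real.log (∫ ω, (Real.exp (-(n * ϑ)) +
          (1 - Real.exp (-(n * ϑ))) * Real.exp (-(n * θ * R ω))) ∂μ))
      (nhdsWithin 0 (Set.Ioi 0))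
      (nhds ((1 - Real.exp (-(n * ϑ))) * ∫ ω, R ω ∂μ)) := by
  set e := Real.exp (-(n * ϑ)) with he
  set c := 1 - e with hc
  have hbd : ∀ θ : ℝ, 0 < θ → ∀ ω, ‖Real.exp (-(n * θ * R ω))‖ ≤ 1 := by
    intro θ hθ ω
    rw [Real.norm_eq_abs, abs_of_pos (Real.exp_pos _)]
    apply Real.exp_le_one_iff.2
    have := mul_nonneg (mul_pos hn hθ).le (hRnonneg ω)
    linarith
  have hmeas : ∀ θ : ℝ, Measurable (fun ω => Real.exp (-(n * θ * R ω))) := by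
    intro θ
    fun_prop
  have hint : ∀ θ : ℝ, 0 < θ → Integrable (fun ω => Real.exp (-(n * θ * R ω))) μ := by
    intro θ hθ
    exact Integrable.of_bound (hmeas θ).aestronglyMeasurable 1
      (Filter.Eventually.of_forall (hbd θ hθ))
  have hdct : Filter.Tendsto (fun θ : ℝ => ∫ ω, c * (θ⁻¹ * (Real.exp (-(n * θ * R ω)) - 1)) ∂μ)
      (nhdsWithin 0 (Set.Ioi 0)) (nhds (∫ ω, c * (-(n * R ω)) ∂μ)) := by
    apply tendsto_integral_filter_of_dominated_convergence (fun ω => |c| * (n * R ω))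
    · refine Filter.Eventually.of_forall fun θ => ?_
      have := hmeas θ
      exact Measurable.aestronglyMeasurable (by fun_prop)
    · filter_upwards [self_mem_nhdsWithin] with θ hθ
      have hθ : 0 < θ := hθ
      refine Filter.Eventually.of_forall fun ω => ?_
      rw [norm_mul, Real.norm_eq_abs]
      refine mul_le_mul_of_nonneg_left ?_ (abs_nonneg _)
      have h1 := Real.add_one_le_exp (-(n * θ * R ω))
      have h2 := (le_abs_self _).trans (hbd θ hθ ω)
      rw [norm_mul, Real.norm_eq_abs, Real.norm_eq_abs, abs_of_pos (inv_pos.2 hθ),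
        inv_mul_le_iff₀ hθ, abs_le]
      constructor <;> nlinarith [mul_nonneg (mul_pos hn hθ).le (hRnonneg ω)]
    · exact (hRint.const_mul n).const_mul _
    · refine Filter.Eventually.of_forall fun ω => ?_
      apply Filter.Tendsto.const_mul
      have hd : HasDerivAt (fun θ : ℝ => Real.exp (-(n * θ * R ω))) (-(n * R ω)) 0 := by
        have := ((((hasDerivAt_id (0:ℝ)).const_mul n).mul_const (R ω)).neg).exp
        simpa using this
      have := (hasDerivAt_iff_tendsto_slope_zero.1 hd).mono_left
        (nhdsWithin_mono 0 (show Set.Ioi (0:ℝ) ⊆ {0}ᶜ from fun x hx => ne_of_gt hx))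
      simpa using this
  set M : ℝ → ℝ := fun θ => ∫ ω, (e + c * Real.exp (-(n * θ * R ω))) ∂μ with hM
  have hM0 : M 0 = 1 := by
    simp [hM, hc]
  have hMd : HasDerivWithinAt M (∫ ω, c * (-(n * R ω)) ∂μ) (Set.Ioi 0) 0 := by
    rw [hasDerivWithinAt_iff_tendsto_slope' (by simp)]
    refine hdct.congr' ?_
    filter_upwards [self_mem_nhdsWithin] with θ hθ
    have hθ : 0 < θ := hθ
    rw [slope_def_field, hM0, sub_zero]
    simp only [hM]
    rw [integral_const_mul, integral_const_mul, integral_sub (hint θ hθ) (integrable_const _),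
      integral_add (integrable_const _) ((hint θ hθ).const_mul c), integral_const_mul]
    simp only [integral_const, probReal_univ, smul_eq_mul, one_mul, mul_one]
    rw [div_eq_inv_mul, hc]
    ring
  have hlog := hMd.log (by rw [hM0]; exact one_ne_zero)
  rw [hasDerivWithinAt_iff_tendsto_slope' (by simp)] at hlog
  have hfin := hlog.const_mul (-(1 / n))
  have hval : -(1 / n) * ((∫ ω, c * (-(n * R ω)) ∂μ) / M 0) = c * ∫ ω, R ω ∂μ := by
    rw [hM0, integral_const_mul, integral_neg, integral_const_mul]
    field_simp
  rw [hval] at hfin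
  refine hfin.congr' ?_
  filter_upwards [self_mem_nhdsWithin] with θ hθ
  have hθ : 0 < θ := hθ
  rw [slope_def_field, hM0, Real.log_one]
  change -(1 / n) * ((Real.log (M θ) - 0) / (θ - 0)) = -(1 / (n * θ)) * Real.log (M θ)
  rw [sub_zero, sub_zero]
  field_simp
end
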